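/- Consequence of projection compatibility: if k ≤ n ≤ N are integers and an algorithm Φ, built only from moves φ_j with j ≤ n, satisfies π_n(Φ(X)) = π_n(Φ(Y)) for all infinite configurations X, Y (i.e. Φ couples the first n balls), then the algorithm φ_k^{N−n} ∘ Φ couples the first N balls. -/

import Mathlib

/-!
Everything is read off the partial sums `binSum X t`. Since `binSum (proj m X) t = min m (binSum X t)`,
two configurations have the same `m`-ball projection exactly when their partial sums agree after
truncation at `m` (`proj_eq_iff`).

A move `φ_k` changes partial sums in a simple way. If `k ≤ X 0`, the sums are shifted by one bin and
increased by one; otherwise `binSum X t` increases by one exactly when `k ≤ binSum X (t + 1)`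
(`binSum_move_of_lt`). For `k ≤ m` all these conditions are visible on sums truncated at `m`, and where
no ball is added the sum is below `k ≤ m`. So the `m` first balls of `X` determine the `m + 1`
first balls of `φ_k X` (`proj_succ_move`): each application of `φ_k` couples one more ball, and
`N - n` applications take `n` to `N`.
-/

open Finset

/-! Bins are indexed by `t : ℕ`, where index `t` stands for the bin labeled `-t`
in the paper (so `t = 0` is the rightmost bin).  A configuration is a function
`X : ℕ → ℕ`, `X t` being the number of balls in bin `t`. -/

/-- `binSum X t` is the number of balls in bins `0, …, t-1`, i.e. strictly to the
right of bin `t`.  In the paper's notation this is `Σ_{j = -t+1}^{0} X(j)`. -/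
def binSum (X : ℕ → ℕ) (t : ℕ) : ℕ := ∑ m ∈ Finset.range t, X m

/-- An infinite configuration: every bin contains a positive number of balls. -/
def IsInfConf (X : ℕ → ℕ) : Prop := ∀ t, 0 < X t

/-- An `n`-configuration: for some `p ≥ 1`, bins `0, …, p-1` are nonempty, all the
other bins are empty, and the total number of balls is `n`. -/
def IsNConf (n : ℕ) (X : ℕ → ℕ) : Prop :=
  ∃ p : ℕ, 1 ≤ p ∧ (∀ t, t < p → 0 < X t) ∧ (∀ t, p ≤ t → X t = 0) ∧ binSum X p = n

/-- The `n`-ball projection `π_n`: keep the `n` rightmost balls, erase the others.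
(Truncated subtraction makes the value `0` as soon as `binSum X t ≥ n`.) -/
def proj (n : ℕ) (X : ℕ → ℕ) : ℕ → ℕ := fun t => min (X t) (n - binSum X t)

/-- The move `φ_k` on infinite configurations: if the rightmost bin contains at
least `k` balls, create a new rightmost bin containing one ball (shifting
everything); otherwise add one ball to the bin immediately to the right of the
bin containing the `k`-th ball counted from the right. -/
noncomputable def move (k : ℕ) (X : ℕ → ℕ) : ℕ → ℕ :=
  if k ≤ X 0 then fun t => if t = 0 then 1 else X (t - 1)
  else fun t => if t = sInf {b : ℕ | k ≤ binSum X (b + 1)} - 1 then X t + 1 else X t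

/-- Delete one ball from the leftmost nonempty bin. -/
noncomputable def removeLeft (X : ℕ → ℕ) : ℕ → ℕ :=
  fun t => if t = sSup {b : ℕ | 0 < X b} then X t - 1 else X t

/-- The move `φ_k` on `n`-configurations: add a ball to the bin immediately to the
right of the bin containing the `k`-th ball from the right (creating a new
rightmost bin if needed), then delete one ball from the leftmost nonempty bin. -/
noncomputable def moveFin (k : ℕ) (X : ℕ → ℕ) : ℕ → ℕ := removeLeft (move k X)

/-- Apply an algorithm, i.e. a finite composition of moves, to an infinite
configuration.  `applyAlg [k₁, …, kₘ] X = φ_{k₁}(φ_{k₂}(⋯ φ_{kₘ}(X)))`. -/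
noncomputable def applyAlg (w : List ℕ) (X : ℕ → ℕ) : ℕ → ℕ := w.foldr move X

/-- Apply an algorithm to a finite configuration. -/
noncomputable def applyAlgFin (w : List ℕ) (X : ℕ → ℕ) : ℕ → ℕ := w.foldr moveFin X

/-- The configuration denoted `[a₁, …, a_p]` in the paper: the list is read from
the leftmost nonempty bin to the rightmost bin. -/
def ofList (L : List ℕ) : ℕ → ℕ := fun t => L.reverse.getD t 0

/-- The distinguished `l`-configurations `X_i` (for `l = k*d + r`, `1 ≤ r ≤ k`):
`X_0 = [k, …, k, r]` (`d` bins of `k` balls), `X_i = [i, k, …, k, r-i]` (`d` bins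
of `k` balls) for `1 ≤ i ≤ r-1`, and `X_i = [i, k, …, k, k+r-i]` (`d-1` bins of
`k` balls) for `r ≤ i ≤ k-1`. -/
def distConf (k d r i : ℕ) : ℕ → ℕ :=
  if i = 0 then ofList (List.replicate d k ++ [r])
  else if i < r then ofList (i :: (List.replicate d k ++ [r - i]))
  else ofList (i :: (List.replicate (d - 1) k ++ [k + r - i]))

/-- The `l`-configurations `Y_j`: `Y_0 = [l]` and `Y_j = [j, l-j]` for `1 ≤ j ≤ l-1`. -/
def yConf (l j : ℕ) : ℕ → ℕ := if j = 0 then ofList [l] else ofList [j, l - j]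

/-- The map `f` from the paper: `f(i) = (k - l + d·i)₊` for `0 ≤ i ≤ k-r-1` and
`f(i) = (k - (d+1)(k-i))₊` for `k-r ≤ i ≤ k-1` (truncated ℕ-subtraction realizes
the positive part). -/
def fMap (k l d r : ℕ) (i : ℕ) : ℕ :=
  if i < k - r then k + d * i - l else k - (d + 1) * (k - i)

/-- The algorithm `Ψ = φ_k^{l-k} ∘ φ_l^{dr + k·d(d-1)/2} ∘ φ_k^{k-r}` acting on
`l`-configurations. -/
noncomputable def Psi (k l d r : ℕ) (X : ℕ → ℕ) : ℕ → ℕ :=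
  (moveFin k)^[l - k] ((moveFin l)^[d * r + k * (d * (d - 1)) / 2] ((moveFin k)^[k - r] X))

lemma binSum_succ (X : ℕ → ℕ) (t : ℕ) : binSum X (t + 1) = binSum X t + X t :=
  Finset.sum_range_succ X t

lemma binSum_zero (X : ℕ → ℕ) : binSum X 0 = 0 := rfl

lemma binSum_mono (X : ℕ → ℕ) : Monotone (binSum X) :=
  monotone_nat_of_le_succ fun t => by rw [binSum_succ]; omega

lemma le_binSum {X : ℕ → ℕ} (hX : IsInfConf X) (t : ℕ) : t ≤ binSum X t := by
  induction t with
  | zero => exact Nat.zero_le _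
  | succ t ih =>
    have := hX t
    rw [binSum_succ]
    omega

lemma binSum_proj (m : ℕ) (X : ℕ → ℕ) (t : ℕ) :
    binSum (proj m X) t = min m (binSum X t) := by
  induction t with
  | zero => simp [binSum_zero]
  | succ t ih =>
    rw [binSum_succ, binSum_succ, ih]
    simp only [proj]
    omega

lemma proj_eq_iff (m : ℕ) (X Y : ℕ → ℕ) :
    proj m X = proj m Y ↔ ∀ t, min m (binSum X t) = min m (binSum Y t) := by
  constructor
  · intro h t
    rw [← binSum_proj, ← binSum_proj, h]
  · intro h
    funext t
    have h0 := h t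
    have h1 := h (t + 1)
    rw [binSum_succ, binSum_succ] at h1
    simp only [proj]
    omega

lemma isInfConf_move (k : ℕ) {X : ℕ → ℕ} (hX : IsInfConf X) : IsInfConf (move k X) := by
  intro t
  have h0 := hX t
  have h1 := hX (t - 1)
  unfold move
  split_ifs <;> dsimp only <;> split_ifs <;> omega

lemma isInfConf_applyAlg (w : List ℕ) {X : ℕ → ℕ} (hX : IsInfConf X) :
    IsInfConf (applyAlg w X) := by
  induction w with
  | nil => exact hX
  | cons j w ih => exact isInfConf_move j ih

lemma binSum_move_of_le {k : ℕ} {X : ℕ → ℕ} (h : k ≤ X 0) (t : ℕ) :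
    binSum (move k X) (t + 1) = binSum X t + 1 := by
  induction t with
  | zero => simp [binSum_succ, binSum_zero, move, h]
  | succ t ih =>
    rw [binSum_succ, ih, binSum_succ]
    simp only [move, h, if_true, Nat.add_one_ne_zero, if_false, Nat.add_sub_cancel]
    omega

/-- When no new bin is created, the added ball lands in the bin just to the right of the one holding
the `k`-th ball, so the sum over the first `t` bins grows exactly when the first `t + 1` bins contain
the `k`-th ball. -/
lemma binSum_move_of_lt {k : ℕ} {X : ℕ → ℕ} (hX : IsInfConf X) (h : X 0 < k) (t : ℕ) :
    binSum (move k X) t = binSum X t + if k ≤ binSum X (t + 1) then 1 else 0 := by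
  have hne : {b : ℕ | k ≤ binSum X (b + 1)}.Nonempty :=
    ⟨k, (Nat.le_succ k).trans (le_binSum hX (k + 1))⟩
  have hmove : move k X = fun t =>
      if t = sInf {b : ℕ | k ≤ binSum X (b + 1)} - 1 then X t + 1 else X t := by
    rw [move, if_neg (by omega)]
  have hiff : ∀ t, k ≤ binSum X (t + 1) ↔ sInf {b : ℕ | k ≤ binSum X (b + 1)} ≤ t := fun t =>
    ⟨fun ht => Nat.sInf_le ht, fun ht => (Nat.sInf_mem hne).trans (binSum_mono X (by omega))⟩
  simp only [hiff t]
  generalize hb : sInf {b : ℕ | k ≤ binSum X (b + 1)} = b at hmove hiff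
  -- The `k`-th ball is not in bin `0`, so the truncated subtraction `b - 1` is a genuine one.
  have hb0 : 0 < b := by
    have h0 := hiff 0
    rw [binSum_succ, binSum_zero] at h0
    omega
  rw [hmove]
  induction t with
  | zero => simp [binSum_zero]; omega
  | succ t ih =>
    rw [binSum_succ, ih, binSum_succ]
    split_ifs <;> omega

/-- For `k ≤ m`, the first `m` balls of a configuration determine the first `m + 1` balls of its
image under `φ_k`. -/
lemma proj_succ_move {k m : ℕ} (hkm : k ≤ m) {X Y : ℕ → ℕ} (hX : IsInfConf X)
    (hY : IsInfConf Y) (h : proj m X = proj m Y) :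
    proj (m + 1) (move k X) = proj (m + 1) (move k Y) := by
  rw [proj_eq_iff] at h ⊢
  have h1 := h 1
  rw [binSum_succ, binSum_succ, binSum_zero, binSum_zero] at h1
  intro t
  rcases Nat.lt_or_ge (X 0) k with hx | hx
  · rw [binSum_move_of_lt hX hx, binSum_move_of_lt hY (by omega)]
    have ht := h t
    have ht' := h (t + 1)
    have hmx := binSum_mono X (Nat.le_succ t)
    have hmy := binSum_mono Y (Nat.le_succ t)
    simp only [Nat.succ_eq_add_one] at hmx hmy
    split_ifs <;> omega
  · cases t with
    | zero => rfl
    | succ t =>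
      rw [binSum_move_of_le hx, binSum_move_of_le (by omega)]
      have ht := h t
      omega

lemma proj_add_iterate_move {k n : ℕ} (hkn : k ≤ n) (d : ℕ) {X Y : ℕ → ℕ} (hX : IsInfConf X)
    (hY : IsInfConf Y) (h : proj n X = proj n Y) :
    proj (n + d) ((move k)^[d] X) = proj (n + d) ((move k)^[d] Y) := by
  induction d generalizing n X Y with
  | zero => exact h
  | succ d ih =>
    rw [Function.iterate_succ_apply, Function.iterate_succ_apply,
      show n + (d + 1) = (n + 1) + d by omega]
    exact ih (by omega) (isInfConf_move k hX) (isInfConf_move k hY)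
      (proj_succ_move hkn hX hY h)

/-- If `k ≤ n ≤ N` and an algorithm `Φ`, built only from moves
`φ_j` with `1 ≤ j ≤ n`, couples the first `n` balls, then `φ_k^{N-n} ∘ Φ` couples
the first `N` balls. -/
theorem couple_more_balls (k n N : ℕ) (hk : 1 ≤ k) (hkn : k ≤ n) (hnN : n ≤ N)
    (w : List ℕ) (hw : ∀ j ∈ w, 1 ≤ j ∧ j ≤ n)
    (hc : ∀ X Y : ℕ → ℕ, IsInfConf X → IsInfConf Y →
      proj n (applyAlg w X) = proj n (applyAlg w Y)) :
    ∀ X Y : ℕ → ℕ, IsInfConf X → IsInfConf Y →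
      proj N ((move k)^[N - n] (applyAlg w X)) =
        proj N ((move k)^[N - n] (applyAlg w Y)) := by
  intro X Y hX hY
  have h := proj_add_iterate_move hkn (N - n) (isInfConf_applyAlg w hX) (isInfConf_applyAlg w hY)
    (hc X Y hX hY)
  rwa [Nat.add_sub_cancel' hnN] at h
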